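/- Let S be a set of N-qubit Pauli strings. If there exists a nonzero matrix V ∈ M_{2^N}(ℂ) such that V P = -P V for every P ∈ S, then there exists an N-qubit Pauli string Q such that Q P = -P Q for every P ∈ S. -/

import Mathlib

/-!
The trace pairing `V ↦ tr (P_q V)` against all Pauli strings is nondegenerate, by the completeness
relation `∑ q, P_q(b, a) P_q(r, c) = 2 ^ N δ_{ra} δ_{cb}` (`sum_pauliString`). So a nonzero `V` has
`tr (P_q V) ≠ 0` for some `q`. Any two Pauli strings commute or anticommute
(`pauliString_comm_or_anticomm`), and if `P_q` commuted with some `P_s`, `s ∈ S`, then conjugation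
by the involution `P_s` would fix `P_q` and negate `V`, so that `tr (P_q V) = -tr (P_q V)`. Hence
the string `q` anticommutes with all of `S`.
-/

open Matrix Complex

/-- The four single-qubit Pauli matrices `I, X, Y, Z`, indexed by `Fin 4`. -/
noncomputable def pauli1 : Fin 4 → Matrix (Fin 2) (Fin 2) ℂ
  | 0 => 1
  | 1 => !![0, 1; 1, 0]
  | 2 => !![0, -Complex.I; Complex.I, 0]
  | 3 => !![1, 0; 0, -1]

/-- The `N`-qubit Pauli string `σ_{s 0} ⊗ ⋯ ⊗ σ_{s (N-1)}`, realized as a matrix indexed by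
`Fin N → Fin 2` (entrywise description of the iterated Kronecker product). -/
noncomputable def PauliString (N : ℕ) (s : Fin N → Fin 4) :
    Matrix (Fin N → Fin 2) (Fin N → Fin 2) ℂ :=
  Matrix.of fun r c => ∏ i, pauli1 (s i) (r i) (c i)

/-- Completeness relation for the Pauli basis of the `2 × 2` matrices. -/
lemma sum_pauli1 (a b r c : Fin 2) :
    ∑ k, pauli1 k b a * pauli1 k r c = if r = a ∧ c = b then 2 else 0 := by
  fin_cases a <;> fin_cases b <;> fin_cases r <;> fin_cases c <;>
    simp [Fin.sum_univ_four, pauli1] <;> norm_num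

lemma pauli1_mul_self (k : Fin 4) : pauli1 k * pauli1 k = 1 := by
  fin_cases k <;> ext i j <;> fin_cases i <;> fin_cases j <;>
    simp [pauli1, Matrix.mul_apply]

lemma pauli1_comm_or_anticomm (k l : Fin 4) :
    ∃ e : ℂ, (e = 1 ∨ e = -1) ∧ pauli1 k * pauli1 l = e • (pauli1 l * pauli1 k) := by
  by_cases h : k = 0 ∨ l = 0 ∨ k = l
  · refine ⟨1, .inl rfl, ?_⟩
    rcases h with rfl | rfl | rfl <;> simp [pauli1]
  · refine ⟨-1, .inr rfl, ?_⟩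
    fin_cases k <;> fin_cases l <;> first
      | simp at h; done
      | ext i j
        fin_cases i <;> fin_cases j <;> simp [pauli1, Matrix.mul_apply]

/-- Pauli strings multiply tensor factor by tensor factor. -/
lemma pauliString_mul_apply {N : ℕ} (s t : Fin N → Fin 4) (r c : Fin N → Fin 2) :
    (PauliString N s * PauliString N t) r c
      = ∏ i, (pauli1 (s i) * pauli1 (t i)) (r i) (c i) := by
  simp only [Matrix.mul_apply, PauliString, Matrix.of_apply, Finset.prod_univ_sum,
    Fintype.piFinset_univ, Finset.prod_mul_distrib]

lemma pauliString_mul_self {N : ℕ} (s : Fin N → Fin 4) :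
    PauliString N s * PauliString N s = 1 := by
  ext r c
  simp only [pauliString_mul_apply, pauli1_mul_self, Matrix.one_apply, Finset.prod_ite_zero,
    Finset.prod_const_one, Finset.mem_univ, true_imp_iff, funext_iff]

lemma pauliString_comm_or_anticomm {N : ℕ} (s t : Fin N → Fin 4) :
    PauliString N s * PauliString N t = PauliString N t * PauliString N s ∨
      PauliString N s * PauliString N t = -(PauliString N t * PauliString N s) := by
  choose e he hmul using fun i => pauli1_comm_or_anticomm (s i) (t i)
  have hprod : ∏ i, e i = 1 ∨ ∏ i, e i = -1 := by
    refine Finset.prod_induction e (fun x => x = 1 ∨ x = -1) ?_ (.inl rfl) fun i _ => he i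
    rintro _ _ (rfl | rfl) (rfl | rfl) <;> simp
  have key : PauliString N s * PauliString N t
      = (∏ i, e i) • (PauliString N t * PauliString N s) := by
    ext r c
    simp only [Matrix.smul_apply, pauliString_mul_apply, hmul, smul_eq_mul,
      Finset.prod_mul_distrib]
  rcases hprod with h | h
  · left; rw [key, h, one_smul]
  · right; rw [key, h, neg_one_smul]

/-- Completeness relation for the Pauli strings, the tensor power of `sum_pauli1`. -/
lemma sum_pauliString {N : ℕ} (a b r c : Fin N → Fin 2) :
    ∑ q, PauliString N q b a * PauliString N q r c = if r = a ∧ c = b then 2 ^ N else 0 := by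
  have h : ∑ q, PauliString N q b a * PauliString N q r c
      = ∏ i, ∑ k, pauli1 k (b i) (a i) * pauli1 k (r i) (c i) := by
    simp only [PauliString, Matrix.of_apply, Finset.prod_univ_sum, Fintype.piFinset_univ,
      Finset.prod_mul_distrib]
  simp only [h, sum_pauli1, Finset.prod_ite_zero, Finset.mem_univ, true_imp_iff, funext_iff,
    forall_and, Finset.prod_const, Finset.card_univ, Fintype.card_fin]

/-- The traces against Pauli strings determine a matrix. -/
lemma sum_pauliString_mul_trace {N : ℕ} (V : Matrix (Fin N → Fin 2) (Fin N → Fin 2) ℂ)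
    (a b : Fin N → Fin 2) :
    ∑ q, PauliString N q b a * (PauliString N q * V).trace = 2 ^ N * V b a := by
  calc ∑ q, PauliString N q b a * (PauliString N q * V).trace
      = ∑ r, ∑ c, (∑ q, PauliString N q b a * PauliString N q r c) * V c r := by
        simp only [Matrix.trace, Matrix.diag_apply, Matrix.mul_apply, Finset.mul_sum,
          Finset.sum_mul, mul_assoc]
        rw [Finset.sum_comm]
        exact Finset.sum_congr rfl fun r _ => Finset.sum_comm
    _ = 2 ^ N * V b a := by
        simp [sum_pauliString, ite_and]

/-- If some nonzero matrix anticommutes with every Pauli string in `S`, then some Pauli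
string anticommutes with every Pauli string in `S`. -/
theorem exists_pauli_anticommuting_of_exists_matrix {N : ℕ} (S : Set (Fin N → Fin 4))
    (h : ∃ V : Matrix (Fin N → Fin 2) (Fin N → Fin 2) ℂ, V ≠ 0 ∧
      ∀ s ∈ S, V * PauliString N s = -(PauliString N s * V)) :
    ∃ q : Fin N → Fin 4, ∀ s ∈ S,
      PauliString N q * PauliString N s = -(PauliString N s * PauliString N q) := by
  obtain ⟨V, hV, hanti⟩ := h
  obtain ⟨q, hq⟩ : ∃ q, (PauliString N q * V).trace ≠ 0 := by
    by_contra! h0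
    apply hV
    ext b a
    simpa [h0] using (sum_pauliString_mul_trace V a b).symm
  refine ⟨q, fun s hs => (pauliString_comm_or_anticomm q s).resolve_left fun hcomm => hq ?_⟩
  have hneg : (PauliString N q * V).trace = -(PauliString N q * V).trace := by
    calc (PauliString N q * V).trace
        = (PauliString N q * (V * PauliString N s) * PauliString N s).trace := by
          simp only [Matrix.mul_assoc, pauliString_mul_self, Matrix.mul_one]
      _ = -(PauliString N s * (PauliString N q * PauliString N s) * V).trace := by
          rw [hanti s hs, Matrix.trace_mul_comm]
          simp only [Matrix.mul_neg, Matrix.trace_neg, Matrix.mul_assoc]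
      _ = -(PauliString N q * V).trace := by
          rw [hcomm, ← Matrix.mul_assoc (PauliString N s), pauliString_mul_self, Matrix.one_mul]
  exact self_eq_neg.mp hneg
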